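/- Let (R, m) be a Cohen–Macaulay commutative Noetherian local ring of dimension 1, and let I be an ideal of R of positive height such that mI = xI for some R-regular element x ∈ m (i.e., I is an Ulrich R-module). Then for every finitely generated R-module M and every integer n ≥ 1, the vanishing Tor_n^R(M, I) = 0 implies pd_R M ≤ n. In particular, I is a rigid-test module, and hence strongly rigid. -/

import Mathlib

open CategoryTheory IsLocalRing

section Prelim

variable (R : Type) [CommRing R]

/-- `Tor_i^R(M, N) = 0`. -/
noncomputable def TorVanish (M N : Type) [AddCommGroup M] [Module R M]
    [AddCommGroup N] [Module R N] (i : ℕ) : Prop :=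
  Subsingleton (((Tor (ModuleCat R) i).obj (ModuleCat.of R M)).obj (ModuleCat.of R N))

/-- `Ext_R^i(M, N) = 0`. -/
noncomputable def ExtVanish (M N : Type) [AddCommGroup M] [Module R M]
    [AddCommGroup N] [Module R N] (i : ℕ) : Prop :=
  Subsingleton (((Ext R (ModuleCat R) i).obj (Opposite.op (ModuleCat.of R M))).obj
    (ModuleCat.of R N))

/-- `pd_R M < n`, expressed by the standard characterization
`Ext_R^i(M, -) = 0` for all `i ≥ n`. -/
def ProjDimLT (M : Type) [AddCommGroup M] [Module R M] (n : ℕ) : Prop :=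
  ∀ (N : ModuleCat R) (i : ℕ), n ≤ i → ExtVanish R M N i

/-- `pd_R M < ∞`. -/
def ProjDimFinite (M : Type) [AddCommGroup M] [Module R M] : Prop :=
  ∃ n, ProjDimLT R M n

/-- `id_R M < n`, expressed by the standard characterization
`Ext_R^i(-, M) = 0` for all `i ≥ n`. -/
def InjDimLT (M : Type) [AddCommGroup M] [Module R M] (n : ℕ) : Prop :=
  ∀ (N : ModuleCat R) (i : ℕ), n ≤ i → ExtVanish R N M i

/-- `id_R M < ∞`. -/
def InjDimFinite (M : Type) [AddCommGroup M] [Module R M] : Prop :=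
  ∃ n, InjDimLT R M n

/-- `M` is a Tor-rigid `R`-module. -/
def TorRigid (M : Type) [AddCommGroup M] [Module R M] : Prop :=
  ∀ (N : ModuleCat R), Module.Finite R N → ∀ n : ℕ, 1 ≤ n → TorVanish R M N n →
    ∀ i : ℕ, n ≤ i → TorVanish R M N i

variable [IsLocalRing R]

/-- The depth of `M`: the supremum of lengths of `M`-regular sequences contained in
the maximal ideal. -/
noncomputable def depth (M : Type) [AddCommGroup M] [Module R M] : ℕ∞ :=
  sSup {n : ℕ∞ | ∃ rs : List R, (∀ x ∈ rs, x ∈ maximalIdeal R) ∧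
    RingTheory.Sequence.IsRegular M rs ∧ (rs.length : ℕ∞) = n}

/-- The dimension of a module, i.e. the Krull dimension of `R ⧸ ann M`. -/
noncomputable def moduleDim (M : Type) [AddCommGroup M] [Module R M] : WithBot ℕ∞ :=
  ringKrullDim (R ⧸ Module.annihilator R M)

/-- `M` is an Ulrich `R`-module of dimension `s` : `M` is nonzero, Cohen–Macaulay of
dimension `s`, and there is an `M`-regular sequence `x₁, …, x_s` in the maximal ideal
with `mM = (x₁, …, x_s)M`. -/
def IsUlrich (M : Type) [AddCommGroup M] [Module R M] (s : ℕ) : Prop :=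
  Nontrivial M ∧ moduleDim R M = (s : ℕ∞) ∧ depth R M = (s : ℕ∞) ∧
  ∃ rs : List R, rs.length = s ∧ (∀ x ∈ rs, x ∈ maximalIdeal R) ∧
    RingTheory.Sequence.IsRegular M rs ∧
    (maximalIdeal R) • (⊤ : Submodule R M) = (Ideal.ofList rs) • ⊤

/-- `R` is a regular local ring: the maximal ideal is generated by `dim R` elements. -/
def IsRegularLocal : Prop :=
  ∃ s : Finset R, Ideal.span (s : Set R) = maximalIdeal R ∧
    (s.card : WithBot ℕ∞) = ringKrullDim R

/-- `R` (of dimension `d`) has minimal multiplicity: there is an `R`-regular sequence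
`x₁, …, x_d` in the maximal ideal `m` with `m² = (x₁, …, x_d)m`. -/
def HasMinimalMultiplicity (d : ℕ) : Prop :=
  ∃ rs : List R, rs.length = d ∧ (∀ x ∈ rs, x ∈ maximalIdeal R) ∧
    RingTheory.Sequence.IsWeaklyRegular R rs ∧
    maximalIdeal R ^ 2 = Ideal.ofList rs * maximalIdeal R

/-- The `n`-th Betti number of `M` over the local ring `R`, i.e. the dimension over the
residue field `k = R ⧸ m` of `Tor_n^R(M, k)` (which is an `m`-torsion module, so we take
the dimension of its reduction mod `m`). -/
noncomputable def betti (M : Type) [AddCommGroup M] [Module R M] (n : ℕ) : ℕ :=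
  Module.finrank (R ⧸ maximalIdeal R)
    ((((Tor (ModuleCat R) n).obj (ModuleCat.of R M)).obj
        (ModuleCat.of R (R ⧸ maximalIdeal R))) ⧸
      (maximalIdeal R • (⊤ : Submodule R
        (((Tor (ModuleCat R) n).obj (ModuleCat.of R M)).obj
          (ModuleCat.of R (R ⧸ maximalIdeal R))))))

end Prelim

/-!
Let `U` be a faithful module with `𝔪U = xU` for a `U`-regular `x ∈ 𝔪`. If `K` is a submodule of a
free module `F` such that `K ⊗ U → F ⊗ U` is injective, then `K` is free: for a minimal cover
`0 → L → G → K → 0`, the image `V` of `L ⊗ U` in `G ⊗ U` lies in `𝔪(G ⊗ U) = x(G ⊗ U)`, while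
`(G ⊗ U)/V = K ⊗ U` is `x`-torsion-free as a submodule of `F ⊗ U`. Hence `V = xV`, so `V = 0` by
Nakayama, and `L = 0` because `U` is faithful. The vanishing of `Tor₁(U, M)` says exactly that the
first syzygy of `M` is such a `K`, and dimension shifting reduces the vanishing of a higher `Tor` to
this case. An ideal `I` of positive height is faithful because the associated primes of a
one-dimensional ring of positive depth are minimal.
-/

section Algebra

open Function TensorProduct

theorem injective_lTensor_X₃_of_shortExact.{u, v, w} {R : Type u} [CommRing R]
    {S : ShortComplex (ModuleCat.{v} R)} {T : ShortComplex (ModuleCat.{w} R)}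
    (hS : S.ShortExact) (hT : T.ShortExact) [Module.Flat R S.X₂]
    (h : Injective (S.f.hom.lTensor T.X₃)) : Injective (T.f.hom.lTensor S.X₃) :=
  lTensor_injective_of_exact_of_exact_of_rTensor_injective
    ((ShortComplex.ShortExact.moduleCat_exact_iff_function_exact S).1 hS.exact)
    hS.moduleCat_surjective_g
    ((ShortComplex.ShortExact.moduleCat_exact_iff_function_exact T).1 hT.exact)
    hT.moduleCat_surjective_g
    ((LinearMap.lTensor_inj_iff_rTensor_inj _ _).1 h)
    (Module.Flat.lTensor_preserves_injective_linearMap _ hT.moduleCat_injective_f)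

variable {R : Type*} [CommRing R]

theorem injective_lTensor_comm {K F L Q : Type*} [AddCommGroup K] [Module R K] [AddCommGroup F]
    [Module R F] [Module.Flat R F] [AddCommGroup L] [Module R L] [AddCommGroup Q] [Module R Q]
    [Module.Flat R Q] {i : K →ₗ[R] F} {j : L →ₗ[R] Q} (hi : Injective i) (hj : Injective j) :
    Injective (i.lTensor L) ↔ Injective (j.lTensor K) := by
  have hcomp : Injective (j.rTensor F ∘ₗ i.lTensor L) ↔ Injective (i.lTensor Q ∘ₗ j.rTensor K) := by
    rw [LinearMap.rTensor_comp_lTensor, LinearMap.lTensor_comp_rTensor]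
  rw [LinearMap.coe_comp, LinearMap.coe_comp,
    (Module.Flat.rTensor_preserves_injective_linearMap j hj).of_comp_iff,
    (Module.Flat.lTensor_preserves_injective_linearMap i hi).of_comp_iff] at hcomp
  rw [hcomp, LinearMap.lTensor_inj_iff_rTensor_inj]

theorem smul_top_tensorProduct_le {I J : Ideal R} {U : Type*} [AddCommGroup U] [Module R U]
    (hIJ : I • (⊤ : Submodule R U) ≤ J • ⊤) (A : Type*) [AddCommGroup A] [Module R A] :
    I • (⊤ : Submodule R (A ⊗[R] U)) ≤ J • ⊤ := by
  rw [Submodule.smul_le]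
  rintro r hr t -
  induction t with
  | zero => simp
  | add t₁ t₂ h₁ h₂ => simpa only [smul_add] using add_mem h₁ h₂
  | tmul a u =>
    have hu : r • u ∈ J • (⊤ : Submodule R U) := hIJ (Submodule.smul_mem_smul hr trivial)
    rw [← tmul_smul]
    exact Submodule.smul_top_le_comap_smul_top J (TensorProduct.mk R A U a) hu

theorem eq_zero_of_forall_tmul_eq_zero {U : Type*} [AddCommGroup U] [Module R U] [FaithfulSMul R U]
    {F : Type*} [AddCommGroup F] [Module R F] [Module.Free R F] {l : F}
    (hl : ∀ u : U, l ⊗ₜ[R] u = 0) : l = 0 := by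
  let b := Module.Free.chooseBasis R F
  refine b.forall_coord_eq_zero_iff.1 fun i ↦ eq_of_smul_eq_smul (α := U) fun u ↦ ?_
  simpa using congrArg (TensorProduct.lid R U ∘ (b.coord i).rTensor U) (hl u)

theorem ker_rTensor_le_smul_top {I : Ideal R} (U : Type*) [AddCommGroup U] [Module R U]
    {M N : Type*} [AddCommGroup M] [Module R M] [AddCommGroup N] [Module R N]
    {f : M →ₗ[R] N} (hf : Surjective f) (hker : f.ker ≤ I • ⊤) :
    (f.rTensor U).ker ≤ I • ⊤ := by
  rw [(rTensor_exact U f.exact_subtype_ker_map hf).linearMap_ker_eq]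
  rintro _ ⟨t, rfl⟩
  induction t with
  | zero => simp
  | add t₁ t₂ h₁ h₂ => simpa only [map_add] using add_mem h₁ h₂
  | tmul l u =>
    exact Submodule.smul_top_le_comap_smul_top _ ((TensorProduct.mk R _ U).flip u) (hker l.2)

variable [IsLocalRing R]

theorem exists_surjective_pi_ker_le_maximalIdeal_smul_top
    (K : Type*) [AddCommGroup K] [Module R K] [Module.Finite R K] :
    ∃ (n : ℕ) (f : (Fin n → R) →ₗ[R] K), Surjective f ∧ f.ker ≤ maximalIdeal R • ⊤ := by
  let b := Module.finBasis (ResidueField R) (ResidueField R ⊗[R] K)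
  obtain ⟨v, hv⟩ :=
    (TensorProduct.mk_surjective R K (ResidueField R) Ideal.Quotient.mk_surjective).comp_left b
  refine ⟨_, Fintype.linearCombination R v, ?_, fun l hl ↦ ?_⟩
  · rw [← LinearMap.range_eq_top, Fintype.range_linearCombination]
    exact span_eq_top_of_tmul_eq_basis v b (congrFun hv)
  · have hl_residue (i) : l i ∈ maximalIdeal R := by
      have hsum : ∑ i, residue R (l i) • b i = 0 := by
        simpa [Fintype.linearCombination_apply, ← hv, tmul_sum, smul_tmul', Algebra.smul_def]
          using congrArg ((1 : ResidueField R) ⊗ₜ[R] ·) (LinearMap.mem_ker.1 hl)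
      exact (residue_eq_zero_iff _).1
        (Fintype.linearIndependent_iff.1 b.linearIndependent _ hsum i)
    rw [pi_eq_sum_univ' l]
    exact sum_mem fun i _ ↦ Submodule.smul_mem_smul (hl_residue i) trivial

theorem free_of_isSMulRegular_tensorProduct {U : Type*} [AddCommGroup U] [Module R U]
    [Module.Finite R U] [FaithfulSMul R U] {x : R} (hx : x ∈ maximalIdeal R)
    (hxU : maximalIdeal R • (⊤ : Submodule R U) ≤ Ideal.span {x} • ⊤)
    {K : Type*} [AddCommGroup K] [Module R K] [Module.FinitePresentation R K]
    (hreg : IsSMulRegular (K ⊗[R] U) x) : Module.Free R K := by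
  obtain ⟨n, f, hf, hker⟩ := exists_surjective_pi_ker_le_maximalIdeal_smul_top (R := R) K
  let V := (f.rTensor U).ker
  have hV_fg : (f.rTensor U).ker.FG := by
    have : Module.Finite R f.ker := .of_fg (Module.FinitePresentation.fg_ker f hf)
    rw [(rTensor_exact U f.exact_subtype_ker_map hf).linearMap_ker_eq]
    exact Module.Finite.iff_fg.1 inferInstance
  have hV_le : V ≤ Ideal.span {x} • ⊤ :=
    (ker_rTensor_le_smul_top U hf hker).trans (smul_top_tensorProduct_le hxU _)
  have hV_smul : V ≤ maximalIdeal R • V := fun v hv ↦ by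
    have hv_smul := hV_le hv
    rw [Submodule.ideal_span_singleton_smul] at hv_smul
    obtain ⟨w, -, rfl⟩ := hv_smul
    refine Submodule.smul_mem_smul hx (LinearMap.mem_ker.2 (hreg.right_eq_zero_of_smul ?_))
    rw [← map_smul]
    exact hv
  have hV : V = ⊥ := Submodule.eq_bot_of_le_smul_of_le_jacobson_bot _ _ hV_fg hV_smul
    (maximalIdeal_le_jacobson _)
  have hf_inj : Injective f := (injective_iff_map_eq_zero f).2 fun l hl ↦
    eq_zero_of_forall_tmul_eq_zero fun u : U ↦ by
      have hlu : l ⊗ₜ[R] u ∈ V := by simp [V, hl]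
      rwa [hV, Submodule.mem_bot] at hlu
  exact Module.Free.of_equiv (LinearEquiv.ofBijective f ⟨hf_inj, hf⟩)

theorem free_of_injective_rTensor {U : Type*} [AddCommGroup U] [Module R U]
    [Module.Finite R U] [FaithfulSMul R U] {x : R} (hx : x ∈ maximalIdeal R)
    (hreg : IsSMulRegular U x)
    (hxU : maximalIdeal R • (⊤ : Submodule R U) ≤ Ideal.span {x} • ⊤)
    {K F : Type*} [AddCommGroup K] [Module R K] [Module.FinitePresentation R K]
    [AddCommGroup F] [Module R F] [Module.Flat R F] (i : K →ₗ[R] F)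
    (hi : Injective (i.rTensor U)) : Module.Free R K :=
  free_of_isSMulRegular_tensorProduct hx hxU ((hreg.lTensor F).of_injective _ hi)

end Algebra

section Ideals

variable {R : Type*} [CommRing R]

theorem smul_top_eq_smul_top_of_mul_eq_mul {I J K : Ideal R} (h : I * K = J * K) :
    I • (⊤ : Submodule R K) = J • ⊤ := by
  apply Submodule.map_injective_of_injective K.injective_subtype
  simpa [Submodule.map_smul''] using h

variable [IsNoetherianRing R] [IsLocalRing R]

theorem mem_minimalPrimes_of_mem_associatedPrimes [Ring.KrullDimLE 1 R] {x : R}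
    (hx : x ∈ maximalIdeal R) (hreg : IsSMulRegular R x) {p : Ideal R}
    (hp : p ∈ associatedPrimes R R) : p ∈ minimalPrimes R := by
  have hxp : x ∉ p := fun hxp ↦ by
    have hx_mem : x ∈ ⋃ p ∈ associatedPrimes R R, (p : Set R) := Set.mem_biUnion hp hxp
    rw [biUnion_associatedPrimes_eq_compl_regular] at hx_mem
    exact hx_mem hreg
  refine (Ring.krullDimLE_one_iff.1 ‹_› p hp.isPrime).resolve_right fun hmax ↦ hxp ?_
  rwa [eq_maximalIdeal hmax]

theorem faithfulSMul_of_forall_not_le [Ring.KrullDimLE 1 R] {x : R}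
    (hx : x ∈ maximalIdeal R) (hreg : IsSMulRegular R x) {I : Ideal R}
    (hI : ∀ p ∈ minimalPrimes R, ¬ I ≤ p) : FaithfulSMul R I := by
  rw [← Module.annihilator_eq_bot, eq_bot_iff]
  intro r hr
  by_contra hr_ne
  obtain ⟨p, hp, hle⟩ := exists_le_isAssociatedPrime_of_isNoetherianRing R r hr_ne
  refine hI p (mem_minimalPrimes_of_mem_associatedPrimes hx hreg hp) fun a ha ↦ hle ?_
  have := congrArg Subtype.val (Module.mem_annihilator.1 hr ⟨a, ha⟩)
  simpa [Submodule.mem_colon_singleton, mul_comm] using this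

end Ideals

section LeftDerived

open Limits

universe v u v' u'

variable {C : Type u} [Category.{v} C] [Abelian C] {D : Type u'} [Category.{v'} D] [Abelian D]

theorem exact_comp_iff_mono {X₁ X₂ X₃ Z : C} {f : X₁ ⟶ X₂} {g : X₂ ⟶ X₃} {w : f ≫ g = 0}
    (hfg : (ShortComplex.mk f g w).Exact) [Epi g] (h : X₃ ⟶ Z) :
    (ShortComplex.mk f (g ≫ h) (by rw [reassoc_of% w, zero_comp])).Exact ↔ Mono h := by
  refine ⟨fun hex ↦ ?_, fun _ ↦ ?_⟩
  · refine (Preadditive.mono_iff_cancel_zero h).2 fun P z hz ↦ ?_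
    obtain ⟨A, π, _, y, hy⟩ := surjective_up_to_refinements_of_epi g z
    obtain ⟨A', π', _, y', hy' : π' ≫ y = y' ≫ f⟩ :=
      hex.exact_up_to_refinements y (by simp [← reassoc_of% hy, hz])
    rw [← cancel_epi π, ← cancel_epi π', hy, reassoc_of% hy', w]
    simp only [comp_zero]
  · exact (ShortComplex.exact_iff_of_epi_of_isIso_of_mono
      (S₁ := ShortComplex.mk f g w) (S₂ := ShortComplex.mk f (g ≫ h) _)
      ⟨𝟙 _, 𝟙 _, h, by simp, by simp⟩).1 hfg

/-- The augmentation `P₀ ⟶ X` of a projective resolution of `X`, with target `X` itself rather than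
the degree zero term of the complex `X` concentrated in degree zero. -/
noncomputable def resolutionAugmentation {X : C} (P : ProjectiveResolution X) :
    P.complex.X 0 ⟶ X :=
  P.π.f 0

instance {X : C} (P : ProjectiveResolution X) : Epi (resolutionAugmentation P) :=
  inferInstanceAs (Epi (P.π.f 0))

@[simp]
theorem d_comp_resolutionAugmentation {X : C} (P : ProjectiveResolution X) :
    P.complex.d 1 0 ≫ resolutionAugmentation P = 0 :=
  P.complex_d_comp_π_f_zero

theorem exact_d_resolutionAugmentation {X : C} (P : ProjectiveResolution X) :
    (ShortComplex.mk _ _ (d_comp_resolutionAugmentation P)).Exact :=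
  P.exact₀

/-- The projective resolution of `X` given by an exact augmented complex
`⋯ ⟶ P₁ ⟶ P₀ ⟶ X ⟶ 0` of projective objects. -/
noncomputable def projectiveResolutionOfExact (P : ChainComplex C ℕ)
    (hP : ∀ n, Projective (P.X n)) {X : C} {ε : P.X 0 ⟶ X} (hε : Epi ε) {w : P.d 1 0 ≫ ε = 0}
    (h₀ : (ShortComplex.mk _ _ w).Exact) (h : ∀ n, P.ExactAt (n + 1)) : ProjectiveResolution X where
  complex := P
  projective := hP
  π := (ChainComplex.toSingle₀Equiv _ _).symm ⟨ε, w⟩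
  quasiIso := ⟨fun n ↦ by
    cases n
    · rw [ChainComplex.quasiIsoAt₀_iff,
        ShortComplex.quasiIso_iff_of_zeros' _ (P.shape 0 0 (by simp)) rfl rfl]
      refine (ShortComplex.exact_and_epi_g_iff_of_iso ?_).2 ⟨h₀, hε⟩
      refine ShortComplex.isoMk (Iso.refl _) (Iso.refl _) (Iso.refl _)
        ((Category.id_comp _).trans (Category.comp_id _).symm) ?_
      refine (Category.id_comp _).trans (.trans ?_ (Category.comp_id _).symm)
      exact (ChainComplex.toSingle₀Equiv_symm_apply_f_zero ε w).symm
    · exact (quasiIsoAt_iff_exactAt' _ _ (ChainComplex.exactAt_succ_single_obj _ _)).2 (h _)⟩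

/-- The projective resolution `⋯ ⟶ Q₁ ⟶ Q₀ ⟶ S.X₂` of `S.X₃` obtained by splicing a short exact
sequence `S` with projective middle term and a projective resolution `Q` of `S.X₁`. -/
noncomputable def splicedResolution {S : ShortComplex C} (hS : S.ShortExact) [Projective S.X₂]
    (Q : ProjectiveResolution S.X₁) : ProjectiveResolution S.X₃ :=
  have := hS.mono_f
  have hw : Q.complex.d 1 0 ≫ resolutionAugmentation Q ≫ S.f = 0 := by
    rw [← Category.assoc, d_comp_resolutionAugmentation, zero_comp]
  have hexact₁ : (ShortComplex.mk _ _ hw).Exact :=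
    (exact_comp_iff_mono (exact_d_resolutionAugmentation Q) S.f).2 hS.mono_f
  have hexact₀ : (ShortComplex.mk (resolutionAugmentation Q ≫ S.f) S.g (by simp)).Exact :=
    (ShortComplex.exact_iff_of_epi_of_isIso_of_mono
      (S₁ := ShortComplex.mk (resolutionAugmentation Q ≫ S.f) S.g (by simp)) (S₂ := S)
      ⟨resolutionAugmentation Q, 𝟙 _, 𝟙 _, by simp, by simp⟩).2 hS.exact
  projectiveResolutionOfExact
    (ChainComplex.augment Q.complex (resolutionAugmentation Q ≫ S.f) hw)
    (by rintro (_ | n); exacts [inferInstanceAs (Projective S.X₂), Q.projective n])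
    hS.epi_g hexact₀ fun n ↦ by
      rw [HomologicalComplex.exactAt_iff' _ (n + 2) (n + 1) n (by simp) (by simp)]
      cases n
      exacts [hexact₁, Q.exact_succ _]

variable [EnoughProjectives C]

theorem isZero_leftDerived_succ_obj_iff (F : C ⥤ D) [F.Additive] {X : C}
    (P : ProjectiveResolution X) (n : ℕ) :
    IsZero ((F.leftDerived (n + 1)).obj X) ↔
      ((ShortComplex.mk _ _ (P.complex.d_comp_d (n + 2) (n + 1) n)).map F).Exact := by
  rw [(P.isoLeftDerivedObj F (n + 1)).isZero_iff]
  refine (HomologicalComplex.exactAt_iff_isZero_homology _ _).symm.trans ?_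
  exact HomologicalComplex.exactAt_iff' _ (n + 2) (n + 1) n (by simp) (by simp)

theorem isZero_leftDerived_X₃_iff (F : C ⥤ D) [F.Additive] {S : ShortComplex C}
    (hS : S.ShortExact) [Projective S.X₂] (n : ℕ) :
    IsZero ((F.leftDerived (n + 2)).obj S.X₃) ↔ IsZero ((F.leftDerived (n + 1)).obj S.X₁) := by
  let Q := ProjectiveResolution.of S.X₁
  rw [isZero_leftDerived_succ_obj_iff F (splicedResolution hS Q),
    isZero_leftDerived_succ_obj_iff F Q]
  -- In positive degrees the spliced resolution is definitionally `Q` shifted by one.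
  rfl

theorem isZero_leftDerived_one_X₃_iff (F : C ⥤ D) [F.Additive] [PreservesFiniteColimits F]
    {S : ShortComplex C} (hS : S.ShortExact) [Projective S.X₂] :
    IsZero ((F.leftDerived 1).obj S.X₃) ↔ Mono (F.map S.f) := by
  let Q := ProjectiveResolution.of S.X₁
  have hexact : (ShortComplex.mk (F.map (Q.complex.d 1 0)) (F.map (resolutionAugmentation Q))
      (by simp [← F.map_comp])).Exact :=
    (exact_d_resolutionAugmentation Q).map_of_epi_of_preservesCokernel F inferInstance inferInstance
  rw [isZero_leftDerived_succ_obj_iff F (splicedResolution hS Q),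
    ← exact_comp_iff_mono hexact (F.map S.f)]
  simp only [← F.map_comp]
  rfl

theorem isZero_leftDerived_obj_of_hasProjectiveDimensionLT (F : C ⥤ D) [F.Additive] {X : C}
    {n : ℕ} (hX : HasProjectiveDimensionLT X (n + 1)) {i : ℕ} (hi : n + 1 ≤ i) :
    IsZero ((F.leftDerived i).obj X) := by
  obtain ⟨j, rfl⟩ := Nat.exists_eq_add_of_le' hi
  clear hi
  induction n generalizing X with
  | zero =>
    have := projective_iff_hasProjectiveDimensionLT_one.2 hX
    exact F.isZero_leftDerived_obj_projective_succ j X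
  | succ n ih =>
    let S := ShortComplex.mk (kernel.ι (Projective.π X)) (Projective.π X) (by simp)
    have hS : S.ShortExact :=
      { exact := ShortComplex.exact_kernel _
        mono_f := inferInstanceAs (Mono (kernel.ι (Projective.π X)))
        epi_g := inferInstanceAs (Epi (Projective.π X)) }
    have : Projective S.X₂ := inferInstanceAs (Projective (Projective.over X))
    exact (isZero_leftDerived_X₃_iff F hS (j + n)).2
      (ih ((hS.hasProjectiveDimensionLT_X₃_iff n this).1 hX))

end LeftDerived

section Tor

open Limits TensorProduct Function

variable {R : Type} [CommRing R]

theorem torVanish_iff_isZero {M N : ModuleCat.{0} R} {n : ℕ} :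
    TorVanish R M N n ↔ IsZero (((Tor (ModuleCat.{0} R) n).obj M).obj N) :=
  ModuleCat.isZero_iff_subsingleton.symm

theorem torVanish_X₃_add_two_iff (U : ModuleCat.{0} R) {S : ShortComplex (ModuleCat.{0} R)}
    (hS : S.ShortExact) [Projective S.X₂] (n : ℕ) :
    TorVanish R U S.X₃ (n + 2) ↔ TorVanish R U S.X₁ (n + 1) := by
  simp only [torVanish_iff_isZero]
  exact isZero_leftDerived_X₃_iff _ hS n

theorem torVanish_X₃_one_iff (U : ModuleCat.{0} R) {S : ShortComplex (ModuleCat.{0} R)}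
    (hS : S.ShortExact) [Projective S.X₂] :
    TorVanish R U S.X₃ 1 ↔ Injective (S.f.hom.lTensor U) := by
  have : PreservesFiniteColimits ((MonoidalCategory.tensoringLeft (ModuleCat.{0} R)).obj U) :=
    inferInstanceAs (PreservesFiniteColimits (MonoidalCategory.tensorLeft U))
  rw [torVanish_iff_isZero]
  exact (isZero_leftDerived_one_X₃_iff _ hS).trans (ModuleCat.mono_iff_injective _)

theorem torVanish_one_comm (M N : ModuleCat.{0} R) : TorVanish R M N 1 ↔ TorVanish R N M 1 := by
  have hS := M.shortExact_projectiveShortComplex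
  have hT := N.shortExact_projectiveShortComplex
  rw [torVanish_X₃_one_iff M hT, torVanish_X₃_one_iff N hS]
  exact ⟨injective_lTensor_X₃_of_shortExact hT hS, injective_lTensor_X₃_of_shortExact hS hT⟩

theorem torVanish_two_comm (M N : ModuleCat.{0} R) : TorVanish R M N 2 ↔ TorVanish R N M 2 := by
  have hS := M.shortExact_projectiveShortComplex
  have hT := N.shortExact_projectiveShortComplex
  set S := M.projectiveShortComplex
  set T := N.projectiveShortComplex
  calc TorVanish R M N 2
    _ ↔ TorVanish R M T.X₁ 1 := torVanish_X₃_add_two_iff M hT 0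
    _ ↔ TorVanish R T.X₁ M 1 := torVanish_one_comm M T.X₁
    _ ↔ Injective (S.f.hom.lTensor T.X₁) := torVanish_X₃_one_iff T.X₁ hS
    _ ↔ Injective (T.f.hom.lTensor S.X₁) :=
      injective_lTensor_comm hS.moduleCat_injective_f hT.moduleCat_injective_f
    _ ↔ TorVanish R S.X₁ N 1 := (torVanish_X₃_one_iff S.X₁ hT).symm
    _ ↔ TorVanish R N S.X₁ 1 := torVanish_one_comm S.X₁ N
    _ ↔ TorVanish R N M 2 := (torVanish_X₃_add_two_iff N hS 0).symm

theorem torVanish_comm (M N : ModuleCat.{0} R) (n : ℕ) :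
    TorVanish R M N (n + 1) ↔ TorVanish R N M (n + 1) := by
  induction n using Nat.twoStepInduction generalizing M N with
  | zero => exact torVanish_one_comm M N
  | one => exact torVanish_two_comm M N
  | more n ih ih' =>
    have hS := M.shortExact_projectiveShortComplex
    have hT := N.shortExact_projectiveShortComplex
    set S := M.projectiveShortComplex
    set T := N.projectiveShortComplex
    calc TorVanish R M N (n + 3)
      _ ↔ TorVanish R M T.X₁ (n + 2) := torVanish_X₃_add_two_iff M hT (n + 1)
      _ ↔ TorVanish R T.X₁ M (n + 2) := ih' ..
      _ ↔ TorVanish R T.X₁ S.X₁ (n + 1) := torVanish_X₃_add_two_iff T.X₁ hS n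
      _ ↔ TorVanish R S.X₁ T.X₁ (n + 1) := ih ..
      _ ↔ TorVanish R S.X₁ N (n + 2) := (torVanish_X₃_add_two_iff S.X₁ hT n).symm
      _ ↔ TorVanish R N S.X₁ (n + 2) := ih' ..
      _ ↔ TorVanish R N M (n + 3) := (torVanish_X₃_add_two_iff N hS (n + 1)).symm

theorem projDimLT_of_hasProjectiveDimensionLT {M : ModuleCat.{0} R} {n : ℕ}
    (hM : HasProjectiveDimensionLT M (n + 1)) : ProjDimLT R M (n + 1) := fun N _ hi ↦
  ModuleCat.isZero_iff_subsingleton.1 (isZero_leftDerived_obj_of_hasProjectiveDimensionLT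
    ((linearYoneda R (ModuleCat.{0} R)).obj N).rightOp hM hi).unop

theorem torVanish_of_hasProjectiveDimensionLT (U : ModuleCat.{0} R) {M : ModuleCat.{0} R} {n : ℕ}
    (hM : HasProjectiveDimensionLT M (n + 1)) {i : ℕ} (hi : n + 1 ≤ i) : TorVanish R U M i :=
  torVanish_iff_isZero.2 (isZero_leftDerived_obj_of_hasProjectiveDimensionLT _ hM hi)

variable [IsNoetherianRing R] [IsLocalRing R] (U : ModuleCat.{0} R) [Module.Finite R U]
  [FaithfulSMul R U] {x : R}

theorem hasProjectiveDimensionLT_of_torVanish (hx : x ∈ maximalIdeal R) (hreg : IsSMulRegular U x)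
    (hxU : maximalIdeal R • (⊤ : Submodule R U) ≤ Ideal.span {x} • ⊤) {M : ModuleCat.{0} R}
    [Module.Finite R M] {n : ℕ} (hM : TorVanish R U M (n + 1)) :
    HasProjectiveDimensionLT M (n + 2) := by
  induction n generalizing M with
  | zero =>
    obtain ⟨F, _, _, _, _, f, hf⟩ := Module.exists_finite_presentation R M
    have hS := LinearMap.shortExact_shortComplexKer hf
    have hinj : Injective (f.ker.subtype.rTensor U) :=
      (LinearMap.lTensor_inj_iff_rTensor_inj _ _).1 ((torVanish_X₃_one_iff U hS).1 hM)
    have := Module.finitePresentation_of_finite R f.ker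
    have := free_of_injective_rTensor hx hreg hxU _ hinj
    refine (hS.hasProjectiveDimensionLT_X₃_iff 0 inferInstance).2 ?_
    rw [← projective_iff_hasProjectiveDimensionLT_one]
    infer_instance
  | succ n ih =>
    obtain ⟨F, _, _, _, _, f, hf⟩ := Module.exists_finite_presentation R M
    have hS := LinearMap.shortExact_shortComplexKer hf
    exact (hS.hasProjectiveDimensionLT_X₃_iff (n + 1) inferInstance).2
      (ih ((torVanish_X₃_add_two_iff U hS n).1 hM))

end Tor

theorem statement9_general (R : Type) [CommRing R] [IsNoetherianRing R] [IsLocalRing R]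
    (U : Type) [AddCommGroup U] [Module R U] [Module.Finite R U] [FaithfulSMul R U]
    {x : R} (hx : x ∈ maximalIdeal R) (hreg : IsSMulRegular U x)
    (hxU : maximalIdeal R • (⊤ : Submodule R U) ≤ Ideal.span {x} • ⊤) :
    (∀ (M : ModuleCat R), Module.Finite R M → ∀ n : ℕ, 1 ≤ n →
      TorVanish R M U n → ProjDimLT R M (n + 1)) ∧
    TorRigid R U ∧
    (∀ (N : ModuleCat R), Module.Finite R N →
      (∃ n₀ : ℕ, ∀ i : ℕ, n₀ ≤ i → TorVanish R U N i) → ProjDimFinite R N) ∧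
    (∀ (N : ModuleCat R), Module.Finite R N →
      (∃ i : ℕ, 1 ≤ i ∧ TorVanish R U N i) → ProjDimFinite R N) := by
  have hpd (M : ModuleCat R) (hM : Module.Finite R M) (n : ℕ) (h : TorVanish R U M (n + 1)) :
      HasProjectiveDimensionLT M (n + 2) :=
    hasProjectiveDimensionLT_of_torVanish (.of R U) hx hreg hxU h
  have hfinite (N : ModuleCat R) (hN : Module.Finite R N) :
      (∃ i : ℕ, 1 ≤ i ∧ TorVanish R U N i) → ProjDimFinite R N := by
    rintro ⟨_ | n, hn, h⟩
    · contradiction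
    · exact ⟨n + 2, projDimLT_of_hasProjectiveDimensionLT (hpd N hN n h)⟩
  refine ⟨?_, ?_, fun N hN ⟨n₀, h⟩ ↦ hfinite N hN ⟨n₀ + 1, by lia, h _ n₀.le_succ⟩, hfinite⟩
  · rintro M hM (_ | n) hn h
    · contradiction
    · exact projDimLT_of_hasProjectiveDimensionLT
        (hpd M hM n ((torVanish_comm M (.of R U) n).1 h))
  · rintro N hN (_ | n) hn h i hi
    · contradiction
    obtain rfl | hlt := hi.eq_or_lt
    · exact h
    · exact torVanish_of_hasProjectiveDimensionLT (.of R U) (hpd N hN n h) hlt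

theorem statement9 (R : Type) [CommRing R] [IsNoetherianRing R] [IsLocalRing R]
    (hdim : ringKrullDim R = 1) (hCM : depth R R = 1)
    (I : Ideal R) (hht : ∀ p ∈ minimalPrimes R, ¬ I ≤ p)
    (hUlrich : ∃ x ∈ maximalIdeal R, IsSMulRegular R x ∧
      maximalIdeal R * I = Ideal.span {x} * I) :
    (∀ (M : ModuleCat R), Module.Finite R M → ∀ n : ℕ, 1 ≤ n →
      TorVanish R M (↥I) n → ProjDimLT R M (n + 1)) ∧
    TorRigid R (↥I) ∧
    (∀ (N : ModuleCat R), Module.Finite R N →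
      (∃ n₀ : ℕ, ∀ i : ℕ, n₀ ≤ i → TorVanish R (↥I) N i) → ProjDimFinite R N) ∧
    (∀ (N : ModuleCat R), Module.Finite R N →
      (∃ i : ℕ, 1 ≤ i ∧ TorVanish R (↥I) N i) → ProjDimFinite R N) := by
  obtain ⟨x, hx, hreg, hI⟩ := hUlrich
  have : Ring.KrullDimLE 1 R := by
    rw [Ring.krullDimLE_iff, hdim]
    rfl
  have := faithfulSMul_of_forall_not_le hx hreg hht
  exact statement9_general R I hx (hreg.submodule _ _)
    (smul_top_eq_smul_top_of_mul_eq_mul hI).le
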